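/- Let U ⊆ ℝ² be open and η : U → ℝ³ be twice continuously differentiable, with induced metric g_{ij}(y) = ⟨∂_iη(y), ∂_jη(y)⟩ invertible at every y ∈ U, inverse entries g^{ij}, and g = det(g_{ij}) > 0. Define Π^α_μ = δ^α_μ − Σ_{k,l=1}^{2} g^{kl} ∂_kη^α ∂_lη_μ and Δ_g η^α = (1/√g) Σ_{i,j=1}^{2} ∂_i(√g · g^{ij} ∂_j η^α). Then at every point of U and for every α ∈ {1,2,3}: √g Δ_g η^α = √g Σ_{i,j=1}^{2} g^{ij} Σ_{μ=1}^{3} Π^α_μ ∂²_{ij}η^μ. -/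

import Mathlib

open Matrix

/-- The vector of partial derivatives `∂_i η(y) ∈ ℝ³` of a map `η : ℝ² → ℝ³`. -/
noncomputable def pdEmb (η : (Fin 2 → ℝ) → Fin 3 → ℝ) (i : Fin 2)
    (y : Fin 2 → ℝ) : Fin 3 → ℝ :=
  fderiv ℝ η y (Pi.single i 1)

/-- The second partial derivatives `∂²_{ij} η(y) ∈ ℝ³` of a map `η : ℝ² → ℝ³`. -/
noncomputable def pd2Emb (η : (Fin 2 → ℝ) → Fin 3 → ℝ) (i j : Fin 2)
    (y : Fin 2 → ℝ) : Fin 3 → ℝ :=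
  fderiv ℝ (fun z => fderiv ℝ η z (Pi.single j 1)) y (Pi.single i 1)

/-- The induced metric `g_{ij}(y) = ⟨∂_i η(y), ∂_j η(y)⟩`. -/
noncomputable def inducedMetric (η : (Fin 2 → ℝ) → Fin 3 → ℝ)
    (y : Fin 2 → ℝ) : Matrix (Fin 2) (Fin 2) ℝ :=
  Matrix.of fun i j => ∑ a, pdEmb η i y a * pdEmb η j y a

/-- The projection `Π^α_μ = δ^α_μ − g^{kl} ∂_kη^α ∂_lη_μ` onto the normal
direction of the embedded surface. -/
noncomputable def normalProjEmb (η : (Fin 2 → ℝ) → Fin 3 → ℝ)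
    (y : Fin 2 → ℝ) (α μ : Fin 3) : ℝ :=
  (if α = μ then 1 else 0)
    - ∑ k, ∑ l, (inducedMetric η y)⁻¹ k l * pdEmb η k y α * pdEmb η l y μ

/-!
The Christoffel symbols of an induced metric are the tangential coefficients of the second
derivatives of the embedding: `Γ_{ij,l} = ∂²_{ij}η · ∂_lη`, so that the normal part of `∂²_{ij}η`
is `∂²_{ij}η - Γ^k_{ij} ∂_kη` (Gauss' formula). On the other hand Jacobi's formula for the
derivative of the determinant gives `∂_i(√g g^{ij}) = -√g g^{ik} Γ^j_{ik}`, which turns the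
divergence form of the Laplace–Beltrami operator of any metric into
`Δ_g = g^{ij} (∂²_{ij} - Γ^k_{ij} ∂_k)`. Applied to the embedding itself, this is the trace of the
normal parts of its second derivatives.
-/

section MatrixCalculus

variable {𝕜 E m n : Type*} [NontriviallyNormedField 𝕜] [NormedAddCommGroup E] [NormedSpace 𝕜 E]

theorem differentiableAt_matrix_apply [Finite n] {A : E → Matrix m n 𝕜} {x : E}
    (hA : DifferentiableAt 𝕜 A x) (i : m) (j : n) : DifferentiableAt 𝕜 (fun z => A z i j) x := by
  have := Fintype.ofFinite n
  exact differentiableAt_pi.1 (differentiableAt_pi.1 hA i) j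

theorem fderiv_matrix_apply [Finite n] {A : E → Matrix m n 𝕜} {x : E}
    (hA : DifferentiableAt 𝕜 A x) (i : m) (j : n) (v : E) :
    fderiv 𝕜 (fun z => A z i j) x v = fderiv 𝕜 A x v i j := by
  have := Fintype.ofFinite n
  exact congr($((hasFDerivAt_pi'.1 (hasFDerivAt_pi'.1 hA.hasFDerivAt i) j).fderiv) v)

variable [Fintype n]

theorem fderiv_dotProduct {u w : E → n → 𝕜} {x : E} (hu : DifferentiableAt 𝕜 u x)
    (hw : DifferentiableAt 𝕜 w x) (v : E) :
    fderiv 𝕜 (fun z => u z ⬝ᵥ w z) x v = u x ⬝ᵥ fderiv 𝕜 w x v + fderiv 𝕜 u x v ⬝ᵥ w x := by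
  have hcoord (a : n) := (hasFDerivAt_pi'.1 hu.hasFDerivAt a).fun_mul
    (hasFDerivAt_pi'.1 hw.hasFDerivAt a)
  simp_rw [dotProduct, (HasFDerivAt.fun_sum fun a _ => hcoord a).fderiv, ← Finset.sum_add_distrib]
  simp [mul_comm]

variable [DecidableEq n] {A : E → Matrix n n 𝕜} {A' : E →L[𝕜] Matrix n n 𝕜} {x : E}

theorem sum_det_updateRow {R : Type*} [CommRing R] (A B : Matrix n n R) :
    ∑ i, (A.updateRow i (B i)).det = (A.adjugate * B).trace := by
  simp_rw [← cramer_transpose_apply, cramer_eq_adjugate_mulVec, ← adjugate_transpose,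
    trace_mul_comm A.adjugate B, trace, diag_apply, mul_apply, mulVec, dotProduct, transpose_apply,
    mul_comm]

variable (𝕜 n) in
/-- The determinant as a continuous multilinear map of the rows, the form in which it can be
differentiated. -/
def detContinuousMultilinearMap : ContinuousMultilinearMap 𝕜 (fun _ : n => n → 𝕜) 𝕜 :=
  ⟨detRowAlternating.toMultilinearMap, continuous_id.matrix_det⟩

theorem hasFDerivAt_matrix_det (hA : HasFDerivAt A A' x) :
    HasFDerivAt (fun z => (A z).det)
      ((detContinuousMultilinearMap 𝕜 n).linearDeriv (A x) ∘L A') x :=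
  ((detContinuousMultilinearMap 𝕜 n).hasFDerivAt (A x)).comp (G := 𝕜) (F := n → n → 𝕜) x hA

theorem differentiableAt_matrix_det (hA : DifferentiableAt 𝕜 A x) :
    DifferentiableAt 𝕜 (fun z => (A z).det) x :=
  (hasFDerivAt_matrix_det hA.hasFDerivAt).differentiableAt

theorem fderiv_matrix_det (hA : DifferentiableAt 𝕜 A x) (v : E) :
    fderiv 𝕜 (fun z => (A z).det) x v = ((A x).adjugate * fderiv 𝕜 A x v).trace :=
  calc
    fderiv 𝕜 (fun z => (A z).det) x v
    _ = (detContinuousMultilinearMap 𝕜 n).linearDeriv (A x) (fderiv 𝕜 A x v) :=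
      congr($((hasFDerivAt_matrix_det hA.hasFDerivAt).fderiv) v)
    _ = ∑ i, ((A x).updateRow i (fderiv 𝕜 A x v i)).det :=
      ContinuousMultilinearMap.linearDeriv_apply ..
    _ = ((A x).adjugate * fderiv 𝕜 A x v).trace := sum_det_updateRow _ _

open scoped Matrix.Norms.Operator in
theorem hasFDerivAt_matrix_inv [CompleteSpace 𝕜] (hA : HasFDerivAt A A' x) (hx : IsUnit (A x)) :
    HasFDerivAt (fun z => (A z)⁻¹)
      ((-ContinuousLinearMap.mulLeftRight 𝕜 (Matrix n n 𝕜) (A x)⁻¹ (A x)⁻¹) ∘L A') x := by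
  -- The topology has to be named: unification does not see that it is the one of the norm.
  have : @CompleteSpace (Matrix n n 𝕜) PseudoMetricSpace.toUniformSpace :=
    FiniteDimensional.complete 𝕜 _
  obtain ⟨u, hu⟩ := hx
  have hinv := hasFDerivAt_ringInverse (𝕜 := 𝕜) u
  rw [hu] at hinv
  have hcomp := hinv.comp x hA
  simp only [Function.comp_def, ← nonsing_inv_eq_ringInverse, coe_units_inv, hu] at hcomp
  exact hcomp

theorem differentiableAt_matrix_inv [CompleteSpace 𝕜] (hA : DifferentiableAt 𝕜 A x)
    (hx : IsUnit (A x)) : DifferentiableAt 𝕜 (fun z => (A z)⁻¹) x :=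
  (hasFDerivAt_matrix_inv hA.hasFDerivAt hx).differentiableAt

theorem fderiv_matrix_inv [CompleteSpace 𝕜] (hA : DifferentiableAt 𝕜 A x) (hx : IsUnit (A x))
    (v : E) : fderiv 𝕜 (fun z => (A z)⁻¹) x v = -((A x)⁻¹ * fderiv 𝕜 A x v * (A x)⁻¹) :=
  congr($((hasFDerivAt_matrix_inv hA.hasFDerivAt hx).fderiv) v)

end MatrixCalculus

section RealMatrixCalculus

variable {E n : Type*} [NormedAddCommGroup E] [NormedSpace ℝ E] [Fintype n] [DecidableEq n]
  {A : E → Matrix n n ℝ} {x : E}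

theorem differentiableAt_sqrt_det (hA : DifferentiableAt ℝ A x) (hx : (A x).det ≠ 0) :
    DifferentiableAt ℝ (fun z => √(A z).det) x :=
  (differentiableAt_matrix_det hA).sqrt hx

theorem fderiv_sqrt_det (hA : DifferentiableAt ℝ A x) (hx : 0 < (A x).det) (v : E) :
    fderiv ℝ (fun z => √(A z).det) x v
      = √(A x).det * (((A x)⁻¹ * fderiv ℝ A x v).trace / 2) := by
  have hs : √(A x).det ≠ 0 := (Real.sqrt_pos.2 hx).ne'
  have hinv : (A x)⁻¹ = (√(A x).det ^ 2)⁻¹ • (A x).adjugate := by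
    rw [Real.sq_sqrt hx.le, inv_def, Ring.inverse_eq_inv']
  rw [fderiv_sqrt (differentiableAt_matrix_det hA) hx.ne', _root_.smul_apply,
    fderiv_matrix_det hA, hinv, smul_mul_assoc, trace_smul, smul_eq_mul, smul_eq_mul]
  field_simp

theorem differentiableAt_sqrt_det_mul_inv_apply (hA : DifferentiableAt ℝ A x)
    (hx : (A x).det ≠ 0) (i j : n) :
    DifferentiableAt ℝ (fun z => √(A z).det * (A z)⁻¹ i j) x :=
  (differentiableAt_sqrt_det hA hx).fun_mul <| differentiableAt_matrix_apply
    (differentiableAt_matrix_inv hA ((isUnit_iff_isUnit_det _).2 hx.isUnit)) i j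

theorem fderiv_sqrt_det_mul_inv_apply (hA : DifferentiableAt ℝ A x) (hx : 0 < (A x).det)
    (i j : n) (v : E) :
    fderiv ℝ (fun z => √(A z).det * (A z)⁻¹ i j) x v
      = √(A x).det * (((A x)⁻¹ * fderiv ℝ A x v).trace / 2 * (A x)⁻¹ i j
        - ((A x)⁻¹ * fderiv ℝ A x v * (A x)⁻¹) i j) := by
  have hunit : IsUnit (A x) := (isUnit_iff_isUnit_det _).2 hx.ne'.isUnit
  have hinv := differentiableAt_matrix_inv hA hunit
  rw [fderiv_fun_mul (differentiableAt_sqrt_det hA hx.ne') (differentiableAt_matrix_apply hinv i j),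
    _root_.add_apply, _root_.smul_apply, _root_.smul_apply, fderiv_sqrt_det hA hx,
    fderiv_matrix_apply hinv, fderiv_matrix_inv hA hunit, Matrix.neg_apply, smul_eq_mul,
    smul_eq_mul]
  ring

end RealMatrixCalculus

section PartialDeriv

theorem differentiableAt_fderiv {𝕜 E F : Type*} [NontriviallyNormedField 𝕜]
    [NormedAddCommGroup E] [NormedSpace 𝕜 E] [NormedAddCommGroup F] [NormedSpace 𝕜 F]
    {f : E → F} {x : E} (hf : ContDiffAt 𝕜 2 f x) : DifferentiableAt 𝕜 (fderiv 𝕜 f) x :=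
  (hf.fderiv_right (m := 1) (by norm_num)).differentiableAt (by norm_num)

variable {ι F : Type*} [DecidableEq ι]

/-- The partial derivative `∂_i f` of a function on `ℝ^ι`. The target may be any topological vector
space, so that it applies to matrix-valued functions, for which no norm is chosen. -/
noncomputable def partialDeriv [AddCommGroup F] [Module ℝ F] [TopologicalSpace F] (i : ι)
    (f : (ι → ℝ) → F) (y : ι → ℝ) : F :=
  fderiv ℝ f y (Pi.single i 1)

variable [Fintype ι] [NormedAddCommGroup F] [NormedSpace ℝ F] {f : (ι → ℝ) → F} {y : ι → ℝ}

theorem differentiableAt_partialDeriv (hf : ContDiffAt ℝ 2 f y) (i : ι) :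
    DifferentiableAt ℝ (partialDeriv i f) y :=
  (differentiableAt_fderiv hf).clm_apply (differentiableAt_const _)

theorem partialDeriv_comm (hf : ContDiffAt ℝ 2 f y) (i j : ι) :
    partialDeriv i (partialDeriv j f) y = partialDeriv j (partialDeriv i f) y := by
  have hsnd (i j : ι) : partialDeriv i (partialDeriv j f) y
      = fderiv ℝ (fderiv ℝ f) y (Pi.single i 1) (Pi.single j 1) :=
    congr($(((ContinuousLinearMap.apply ℝ F (Pi.single j 1)).hasFDerivAt.comp y
      (differentiableAt_fderiv hf).hasFDerivAt).fderiv) (Pi.single i 1))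
  rw [hsnd, hsnd]
  exact hf.isSymmSndFDerivAt (by simp) _ _

end PartialDeriv

section RiemannianMetric

variable {ι F : Type*} [Fintype ι] [DecidableEq ι] [NormedAddCommGroup F] [NormedSpace ℝ F]

/-- The Christoffel symbols of the first kind,
`Γ_{ij,l} = (∂_i g_{jl} + ∂_j g_{il} - ∂_l g_{ij}) / 2`. -/
noncomputable def christoffelFirst (g : (ι → ℝ) → Matrix ι ι ℝ) (y : ι → ℝ) (i j l : ι) : ℝ :=
  (partialDeriv i g y j l + partialDeriv j g y i l - partialDeriv l g y i j) / 2

/-- The Christoffel symbols of the second kind, `Γ^k_{ij} = g^{kl} Γ_{ij,l}`; the upper index is the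
first argument. -/
noncomputable def christoffel (g : (ι → ℝ) → Matrix ι ι ℝ) (y : ι → ℝ) (k i j : ι) : ℝ :=
  ∑ l, (g y)⁻¹ k l * christoffelFirst g y i j l

/-- The Laplace–Beltrami operator in divergence form, `Δ_g f = (1/√g) ∂_i(√g g^{ij} ∂_j f)`, acting
componentwise on vector-valued functions. -/
noncomputable def laplaceBeltrami (g : (ι → ℝ) → Matrix ι ι ℝ) (f : (ι → ℝ) → F) (y : ι → ℝ) : F :=
  (√(g y).det)⁻¹ •
    ∑ i, ∑ j, partialDeriv i (fun z => (√(g z).det * (g z)⁻¹ i j) • partialDeriv j f z) y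

variable {g : (ι → ℝ) → Matrix ι ι ℝ} {f : (ι → ℝ) → F} {y : ι → ℝ}

theorem partialDeriv_sqrt_det_mul_inv_apply (hg : DifferentiableAt ℝ g y) (hpos : 0 < (g y).det)
    (i j k : ι) :
    partialDeriv k (fun z => √(g z).det * (g z)⁻¹ i j) y
      = √(g y).det * (((g y)⁻¹ * partialDeriv k g y).trace / 2 * (g y)⁻¹ i j
        - ((g y)⁻¹ * partialDeriv k g y * (g y)⁻¹) i j) :=
  fderiv_sqrt_det_mul_inv_apply hg hpos i j _

theorem sum_inv_mul_christoffelFirst (hsymm : (g y).IsSymm) (l : ι) :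
    ∑ i, ∑ k, (g y)⁻¹ i k * christoffelFirst g y i k l
      = ∑ i, ((g y)⁻¹ * partialDeriv i g y) i l - ((g y)⁻¹ * partialDeriv l g y).trace / 2 := by
  have hinv (i k : ι) : (g y)⁻¹ i k = (g y)⁻¹ k i := hsymm.inv.apply k i
  have hfirst : ∑ i, ∑ k, (g y)⁻¹ i k * partialDeriv i g y k l
      = ∑ i, ((g y)⁻¹ * partialDeriv i g y) i l := rfl
  have hsecond : ∑ i, ∑ k, (g y)⁻¹ i k * partialDeriv k g y i l
      = ∑ i, ((g y)⁻¹ * partialDeriv i g y) i l := by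
    rw [Finset.sum_comm]
    simp_rw [hinv, mul_apply]
  have hthird : ∑ i, ∑ k, (g y)⁻¹ i k * partialDeriv l g y i k
      = ((g y)⁻¹ * partialDeriv l g y).trace := by
    rw [Finset.sum_comm]
    simp_rw [hinv, trace, diag_apply, mul_apply]
  simp_rw [christoffelFirst, mul_div_assoc', mul_sub, mul_add, ← Finset.sum_div,
    Finset.sum_sub_distrib, Finset.sum_add_distrib, hfirst, hsecond, hthird]
  ring

theorem sum_inv_mul_christoffel (g : (ι → ℝ) → Matrix ι ι ℝ) (y : ι → ℝ) (j : ι) :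
    ∑ i, ∑ k, (g y)⁻¹ i k * christoffel g y j i k
      = ∑ l, (g y)⁻¹ j l * ∑ i, ∑ k, (g y)⁻¹ i k * christoffelFirst g y i k l := by
  simp_rw [christoffel, Finset.mul_sum]
  rw [Finset.sum_comm_cycle]
  simp_rw [mul_left_comm]

theorem sum_partialDeriv_sqrt_det_mul_inv (hg : DifferentiableAt ℝ g y) (hsymm : (g y).IsSymm)
    (hpos : 0 < (g y).det) (j : ι) :
    ∑ i, partialDeriv i (fun z => √(g z).det * (g z)⁻¹ i j) y
      = -(√(g y).det * ∑ i, ∑ k, (g y)⁻¹ i k * christoffel g y j i k) := by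
  have hconj : ∑ l, (g y)⁻¹ j l * ∑ i, ((g y)⁻¹ * partialDeriv i g y) i l
      = ∑ i, ((g y)⁻¹ * partialDeriv i g y * (g y)⁻¹) i j := by
    simp_rw [Finset.mul_sum, Matrix.mul_apply (N := (g y)⁻¹), hsymm.inv.apply, mul_comm]
    exact Finset.sum_comm
  have htrace (i : ι) : ((g y)⁻¹ * partialDeriv i g y).trace / 2 * (g y)⁻¹ i j
      = (g y)⁻¹ j i * (((g y)⁻¹ * partialDeriv i g y).trace / 2) := by
    rw [hsymm.inv.apply, mul_comm]
  simp_rw [sum_inv_mul_christoffel, sum_inv_mul_christoffelFirst hsymm, mul_sub,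
    Finset.sum_sub_distrib, hconj, partialDeriv_sqrt_det_mul_inv_apply hg hpos, htrace,
    ← Finset.mul_sum, Finset.sum_sub_distrib]
  ring

theorem laplaceBeltrami_eq_sum_christoffel (hg : DifferentiableAt ℝ g y) (hsymm : (g y).IsSymm)
    (hpos : 0 < (g y).det) (hf : ∀ j, DifferentiableAt ℝ (partialDeriv j f) y) :
    laplaceBeltrami g f y = ∑ i, ∑ j, (g y)⁻¹ i j •
      (partialDeriv i (partialDeriv j f) y - ∑ k, christoffel g y k i j • partialDeriv k f y) := by
  have hprod (i j : ι) :
      partialDeriv i (fun z => (√(g z).det * (g z)⁻¹ i j) • partialDeriv j f z) y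
        = (√(g y).det * (g y)⁻¹ i j) • partialDeriv i (partialDeriv j f) y
          + partialDeriv i (fun z => √(g z).det * (g z)⁻¹ i j) y • partialDeriv j f y :=
    congr($(fderiv_fun_smul (differentiableAt_sqrt_det_mul_inv_apply hg hpos.ne' i j) (hf j))
      (Pi.single i 1))
  have hlower : ∑ i, ∑ j, partialDeriv i (fun z => √(g z).det * (g z)⁻¹ i j) y • partialDeriv j f y
      = -(√(g y).det • ∑ i, ∑ j, (g y)⁻¹ i j •
          ∑ k, christoffel g y k i j • partialDeriv k f y) := by
    rw [Finset.sum_comm]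
    simp_rw [← Finset.sum_smul, sum_partialDeriv_sqrt_det_mul_inv hg hsymm hpos, neg_smul,
      Finset.sum_neg_distrib, mul_smul, ← Finset.smul_sum, Finset.sum_smul, mul_smul,
      Finset.smul_sum]
    exact congrArg _ Finset.sum_comm_cycle.symm
  simp_rw [laplaceBeltrami, hprod, Finset.sum_add_distrib, hlower, mul_smul, ← Finset.smul_sum,
    smul_sub, Finset.sum_sub_distrib, ← sub_eq_add_neg, ← smul_sub]
  rw [inv_smul_smul₀ (Real.sqrt_pos.2 hpos).ne']

theorem laplaceBeltrami_apply {κ : Type*} [Fintype κ] {f : (ι → ℝ) → κ → ℝ}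
    (hg : DifferentiableAt ℝ g y) (hdet : (g y).det ≠ 0)
    (hf : ∀ j, DifferentiableAt ℝ (partialDeriv j f) y) (a : κ) :
    laplaceBeltrami g f y a = (√(g y).det)⁻¹ *
      ∑ i, ∑ j, partialDeriv i (fun z => √(g z).det * (g z)⁻¹ i j * partialDeriv j f z a) y := by
  have hcoord (i j : ι) :
      partialDeriv i (fun z => (√(g z).det * (g z)⁻¹ i j) • partialDeriv j f z) y a
        = partialDeriv i (fun z => √(g z).det * (g z)⁻¹ i j * partialDeriv j f z a) y :=
    (congr($(fderiv_apply ((differentiableAt_sqrt_det_mul_inv_apply hg hdet i j).fun_smul (hf j)) a)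
      (Pi.single i 1))).symm
  simp_rw [laplaceBeltrami, Pi.smul_apply, Finset.sum_apply, hcoord, smul_eq_mul]

end RiemannianMetric

section Embedding

variable {ι κ : Type*} [DecidableEq ι] [Fintype κ]

/-- The first fundamental form `g_{ij} = ∂_iη · ∂_jη` of a map `η : ℝ^ι → ℝ^κ`, as a matrix-valued
function. -/
noncomputable def firstFundamentalForm (η : (ι → ℝ) → κ → ℝ) (y : ι → ℝ) : Matrix ι ι ℝ :=
  of fun i j => partialDeriv i η y ⬝ᵥ partialDeriv j η y

theorem firstFundamentalForm_isSymm (η : (ι → ℝ) → κ → ℝ) (y : ι → ℝ) :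
    (firstFundamentalForm η y).IsSymm :=
  IsSymm.ext fun _ _ => dotProduct_comm _ _

variable [Fintype ι] {η : (ι → ℝ) → κ → ℝ} {y : ι → ℝ}

theorem differentiableAt_firstFundamentalForm (hη : ContDiffAt ℝ 2 η y) :
    DifferentiableAt ℝ (firstFundamentalForm η) y :=
  differentiableAt_pi.2 fun i => differentiableAt_pi.2 fun j => DifferentiableAt.fun_sum fun a _ =>
    (differentiableAt_pi.1 (differentiableAt_partialDeriv hη i) a).fun_mul
      (differentiableAt_pi.1 (differentiableAt_partialDeriv hη j) a)

theorem partialDeriv_firstFundamentalForm_apply (hη : ContDiffAt ℝ 2 η y) (i j k : ι) :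
    partialDeriv k (firstFundamentalForm η) y i j
      = partialDeriv i η y ⬝ᵥ partialDeriv k (partialDeriv j η) y
        + partialDeriv k (partialDeriv i η) y ⬝ᵥ partialDeriv j η y :=
  (fderiv_matrix_apply (differentiableAt_firstFundamentalForm hη) i j _).symm.trans
    (fderiv_dotProduct (differentiableAt_partialDeriv hη i) (differentiableAt_partialDeriv hη j) _)

theorem christoffelFirst_firstFundamentalForm (hη : ContDiffAt ℝ 2 η y) (i j l : ι) :
    christoffelFirst (firstFundamentalForm η) y i j l
      = partialDeriv i (partialDeriv j η) y ⬝ᵥ partialDeriv l η y := by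
  simp_rw [christoffelFirst, partialDeriv_firstFundamentalForm_apply hη,
    partialDeriv_comm hη j i, partialDeriv_comm hη l i, partialDeriv_comm hη l j,
    dotProduct_comm (partialDeriv _ η y)]
  ring

variable [DecidableEq κ]

/-- The matrix `Π = 1 - g^{kl} ∂_kη ∂_lηᵀ` of the orthogonal projection of `ℝ^κ` onto the normal
space of the map `η` at `y`. -/
noncomputable def normalProj (η : (ι → ℝ) → κ → ℝ) (y : ι → ℝ) : Matrix κ κ ℝ :=
  1 - ∑ k, ∑ l, (firstFundamentalForm η y)⁻¹ k l •
    vecMulVec (partialDeriv k η y) (partialDeriv l η y)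

theorem normalProj_apply (η : (ι → ℝ) → κ → ℝ) (y : ι → ℝ) (a b : κ) :
    normalProj η y a b = (if a = b then 1 else 0) - ∑ k, ∑ l,
      (firstFundamentalForm η y)⁻¹ k l * partialDeriv k η y a * partialDeriv l η y b := by
  simp only [normalProj, Matrix.sub_apply, one_apply, Matrix.sum_apply, Matrix.smul_apply,
    vecMulVec_apply, smul_eq_mul, mul_assoc]

theorem normalProj_mulVec (η : (ι → ℝ) → κ → ℝ) (y : ι → ℝ) (v : κ → ℝ) :
    normalProj η y *ᵥ v = v - ∑ k, (∑ l, (firstFundamentalForm η y)⁻¹ k l *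
      (v ⬝ᵥ partialDeriv l η y)) • partialDeriv k η y := by
  simp_rw [normalProj, sub_mulVec, one_mulVec, sum_mulVec, smul_mulVec, vecMulVec_mulVec,
    Finset.sum_smul, mul_smul, op_smul_eq_smul, dotProduct_comm v]

theorem normalProj_mulVec_partialDeriv_partialDeriv (hη : ContDiffAt ℝ 2 η y) (i j : ι) :
    normalProj η y *ᵥ partialDeriv i (partialDeriv j η) y
      = partialDeriv i (partialDeriv j η) y
        - ∑ k, christoffel (firstFundamentalForm η) y k i j • partialDeriv k η y := by
  simp_rw [normalProj_mulVec, christoffel, christoffelFirst_firstFundamentalForm hη]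

theorem sqrt_mul_laplaceBeltrami_eq_proj_general (hη : ContDiffAt ℝ 2 η y)
    (hpos : 0 < (firstFundamentalForm η y).det) :
    laplaceBeltrami (firstFundamentalForm η) η y
      = ∑ i, ∑ j, (firstFundamentalForm η y)⁻¹ i j •
          (normalProj η y *ᵥ partialDeriv i (partialDeriv j η) y) := by
  simp_rw [normalProj_mulVec_partialDeriv_partialDeriv hη]
  exact laplaceBeltrami_eq_sum_christoffel (differentiableAt_firstFundamentalForm hη)
    (firstFundamentalForm_isSymm η y) hpos (differentiableAt_partialDeriv hη)

end Embedding

theorem laplaceBeltrami_inducedMetric_apply {η : (Fin 2 → ℝ) → Fin 3 → ℝ} {y : Fin 2 → ℝ}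
    (hη : ContDiffAt ℝ 2 η y) (hpos : 0 < (inducedMetric η y).det) (α : Fin 3) :
    laplaceBeltrami (firstFundamentalForm η) η y α = (√(inducedMetric η y).det)⁻¹ *
      ∑ i, ∑ j, fderiv ℝ (fun z => √(inducedMetric η z).det * (inducedMetric η z)⁻¹ i j
        * pdEmb η j z α) y (Pi.single i 1) :=
  laplaceBeltrami_apply (differentiableAt_firstFundamentalForm hη) hpos.ne'
    (differentiableAt_partialDeriv hη) α

theorem normalProjEmb_eq_normalProj (η : (Fin 2 → ℝ) → Fin 3 → ℝ) (y : Fin 2 → ℝ) (α μ : Fin 3) :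
    normalProjEmb η y α μ = normalProj η y α μ :=
  (normalProj_apply η y α μ).symm

/-- For a `C²` embedding `η : U ⊆ ℝ² → ℝ³` with induced metric `g` of positive
determinant, `√g Δ_g η^α = √g g^{ij} Π^α_μ ∂²_{ij}η^μ`, with `Δ_g` the
Laplace–Beltrami operator in divergence form and `Π` the normal projection. -/
theorem sqrt_mul_laplaceBeltrami_eq_proj (U : Set (Fin 2 → ℝ)) (hU : IsOpen U)
    (η : (Fin 2 → ℝ) → Fin 3 → ℝ) (hη : ContDiffOn ℝ 2 η U)
    (hgdet : ∀ y ∈ U, 0 < (inducedMetric η y).det)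
    (y : Fin 2 → ℝ) (hy : y ∈ U) (α : Fin 3) :
    Real.sqrt (inducedMetric η y).det *
        ((Real.sqrt (inducedMetric η y).det)⁻¹ *
          ∑ i, ∑ j, fderiv ℝ
            (fun z => Real.sqrt (inducedMetric η z).det * (inducedMetric η z)⁻¹ i j
              * pdEmb η j z α) y (Pi.single i 1))
      = Real.sqrt (inducedMetric η y).det
          * ∑ i, ∑ j, (inducedMetric η y)⁻¹ i j
              * ∑ μ, normalProjEmb η y α μ * pd2Emb η i j y μ := by
  have hη' : ContDiffAt ℝ 2 η y := hη.contDiffAt (hU.mem_nhds hy)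
  rw [← laplaceBeltrami_inducedMetric_apply hη' (hgdet y hy),
    sqrt_mul_laplaceBeltrami_eq_proj_general hη' (hgdet y hy)]
  simp_rw [Finset.sum_apply, Pi.smul_apply, normalProjEmb_eq_normalProj]
  rfl
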